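/- For the tribonacci number β and every z ≥ 1, S_β(6z+1) = [(01(011)^{z-1}01(011)^z)^∞]_β and S_β(6z+4) = [(01(011)^{z-1}01(011)^{z+1})^∞]_β. -/

import Mathlib

/-!
Write `c = 1/β`, so `c³ + c² + c = 1`. Prepending a word `w` to a tail value `y` is the increasing
affine map `wordVal c w` of slope `c ^ |w|`, so comparing orbit points amounts to comparing words,
and each word has a unique periodic value. Let `v` be the value of `(01(011)^m 01(011)^q)^∞` with
`m = z - 1` and `q = z` or `q = z + 1`, and let `p = 4 + 3m + 3q` be the length of the word.

*`v` is attained* (`crit_survives`). Every proper suffix of the critical word gives a tail in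
`(v, 1)`: a tail starting with `1` or `011` is clearly larger than `v < [0110^∞]_β`, and the tail
starting at the second `01` is larger because more blocks `011` follow it (`m < q`). So the orbit
of `v` stays in `[v, 1)`, and as it returns to `v` only at multiples of `p`, the minimal period
is `p`.

*`v` is optimal* (`no_orbit_above`). Suppose an orbit of minimal period `p` stays strictly above
`v`. Its digits contain no `111` since all points are below `1`, and no `00` since `v ≥ [010^∞]_β`.
Hence they are a concatenation of blocks `01(011)^{k_i}`. A period contains `a` blocks with
`2a + 3 ∑ k_i = p`, and `p ≡ 1` modulo `3` gives `a ≡ 2` modulo `3`. Comparison with `v` gives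
`k_i ≥ m` for all `i`, and `k_{i+1} ≥ q` whenever `k_i = m`. For `a ≥ 5` this makes the period too
long. For `a = 2` the exponents are `(m, q)`, `(q, m)` or, if `q = m + 2`, `(m+1, m+1)`. In the
first two cases the orbit is that of `v`, and in the third its minimal period divides `p / 2`.
-/


open Function Filter

noncomputable section

/-- Left shift on sequences. -/
def shift (x : ℕ → ℕ) : ℕ → ℕ := fun i => x (i + 1)

/-- Strict lexicographic order on digit sequences. -/
def seqLt (x y : ℕ → ℕ) : Prop := ∃ n, (∀ i < n, x i = y i) ∧ x n < y n

/-- Non-strict lexicographic order. -/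
def seqLe (x y : ℕ → ℕ) : Prop := seqLt x y ∨ x = y

/-- The periodic sequence obtained by repeating the word `w`. -/
def wordSeq (w : List ℕ) : ℕ → ℕ := fun i => w.getD (i % w.length) 0

/-- The β-transformation x ↦ βx mod 1 on [0,1). -/
def Tmap (β : ℝ) : ℝ → ℝ := fun x => Int.fract (β * x)

/-- Survivor set of the open dynamical system with hole [0, t). -/
def K (β t : ℝ) : Set ℝ := {x | x ∈ Set.Ico (0:ℝ) 1 ∧ ∀ n : ℕ, t ≤ (Tmap β)^[n] x}

/-- The critical value `S_β(p)`. -/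
def S (β : ℝ) (p : ℕ) : ℝ :=
  sSup {t | t ∈ Set.Ico (0:ℝ) 1 ∧ ∃ x ∈ K β t, Function.minimalPeriod (Tmap β) x = p}

/-- Value of a digit sequence in base β. -/
def val (β : ℝ) (x : ℕ → ℕ) : ℝ := ∑' i, (x i : ℝ) / β ^ (i + 1)

/-! ### Words as affine maps -/

/-- Value `[w y]_β` of the word `w` followed by the tail value `y`, written with `c = 1/β`. -/
def wordVal (c : ℝ) : List ℕ → ℝ → ℝ
  | [], y => y
  | d :: w, y => c * (d + wordVal c w y)

/-- The word `(011)^k`. -/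
abbrev rep (k : ℕ) : List ℕ := (List.replicate k ([0,1,1] : List ℕ)).flatten

/-- The word `01(011)^m 01(011)^q`. -/
abbrev critWord (m q : ℕ) : List ℕ := [0,1] ++ rep m ++ [0,1] ++ rep q

lemma rep_succ (k : ℕ) : rep (k + 1) = [0,1,1] ++ rep k := by
  simp [rep, List.replicate_succ]

lemma rep_add (a b : ℕ) : rep (a + b) = rep a ++ rep b := by
  unfold rep
  rw [List.replicate_add, List.flatten_append]

lemma length_rep (k : ℕ) : (rep k).length = 3 * k := by
  simp [rep, mul_comm]

lemma length_critWord (m q : ℕ) : (critWord m q).length = 4 + 3 * m + 3 * q := by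
  simp only [critWord, List.length_append, length_rep, List.length_cons, List.length_nil]
  ring

lemma wordVal_append (c : ℝ) (u w : List ℕ) (y : ℝ) :
    wordVal c (u ++ w) y = wordVal c u (wordVal c w y) := by
  induction u with
  | nil => rfl
  | cons d u ih => simp [wordVal, ih]

/-- `wordVal c w` is affine with slope `c ^ |w|`. -/
lemma wordVal_sub (c : ℝ) (w : List ℕ) (y y' : ℝ) :
    wordVal c w y - wordVal c w y' = c ^ w.length * (y - y') := by
  induction w with
  | nil => simp [wordVal]
  | cons d w ih =>
    simp only [wordVal, List.length_cons, pow_succ]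
    linear_combination c * ih

lemma wordVal_lt_iff {c : ℝ} (hc : 0 < c) (w : List ℕ) (y y' : ℝ) :
    wordVal c w y < wordVal c w y' ↔ y < y' := by
  have h := wordVal_sub c w y y'
  have hp : 0 < c ^ w.length := pow_pos hc _
  constructor
  · intro hl
    by_contra! hn
    nlinarith [mul_nonneg hp.le (sub_nonneg.2 hn)]
  · intro hl
    nlinarith [mul_pos hp (sub_pos.2 hl)]

lemma wordVal_nonneg {c : ℝ} (hc : 0 < c) (w : List ℕ) {y : ℝ} (hy : 0 ≤ y) :
    0 ≤ wordVal c w y := by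
  induction w with
  | nil => exact hy
  | cons d w ih =>
    simp only [wordVal]
    positivity

lemma wordVal_fix_unique {c : ℝ} (hc : 0 < c) (hc1 : c < 1) {w : List ℕ} (hw : w ≠ [])
    {y y' : ℝ} (h : y = wordVal c w y) (h' : y' = wordVal c w y') : y = y' := by
  have hs := wordVal_sub c w y y'
  rw [← h, ← h'] at hs
  have hp : c ^ w.length < 1 := pow_lt_one₀ hc.le hc1 (by simpa using hw)
  have : (1 - c ^ w.length) * (y - y') = 0 := by linear_combination hs
  rcases mul_eq_zero.1 this with h0 | h0 <;> linarith

lemma wordVal_block_lt {c : ℝ} (hc : 0 < c) (h3 : c ^ 3 + c ^ 2 + c = 1) {k : ℕ} {y : ℝ}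
    (hy : y < c) : wordVal c (rep k) y < c := by
  induction k with
  | zero => simpa [rep, wordVal] using hy
  | succ k ih =>
    rw [rep_succ, wordVal_append]
    simp only [wordVal]
    push_cast
    nlinarith [mul_pos (pow_pos hc 3) (sub_pos.2 ih)]

/-- A fixed value of `critWord m q` lies in `[0, 1/β)`. -/
lemma fix_mem {c : ℝ} (hc : 0 < c) (h3 : c ^ 3 + c ^ 2 + c = 1) {m q : ℕ} {v : ℝ}
    (hv : v = wordVal c (critWord m q) v) : 0 ≤ v ∧ v < c := by
  have hc1 : c < 1 := by nlinarith [pow_pos hc 2, pow_pos hc 3]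
  have hp : c ^ (critWord m q).length < 1 :=
    pow_lt_one₀ hc.le hc1 (by rw [length_critWord]; omega)
  have h0 : 0 ≤ v := by
    have hs := wordVal_sub c (critWord m q) v 0
    rw [← hv] at hs
    have := wordVal_nonneg hc (critWord m q) (le_refl (0:ℝ))
    by_contra! hn
    nlinarith
  refine ⟨h0, ?_⟩
  -- the block `011` fixes `c`, and the block `01` maps everything up to `c` strictly below `c`
  have key : ∀ y, y ≤ c → wordVal c [0,1] y < c := by
    intro y hy
    simp only [wordVal]
    push_cast
    nlinarith [mul_nonneg (pow_pos hc 2).le (sub_nonneg.2 hy), pow_pos hc 4, pow_pos hc 3, pow_pos hc 2]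
  have hle : ∀ k, wordVal c (rep k) c = c := by
    intro k
    induction k with
    | zero => simp [rep, wordVal]
    | succ k ih =>
      rw [rep_succ, wordVal_append, ih]
      simp only [wordVal]
      push_cast
      linear_combination c * h3
  have hlt : wordVal c (critWord m q) c < c := by
    simp only [critWord, wordVal_append]
    rw [hle]
    exact key _ (wordVal_block_lt hc h3 (key _ le_rfl)).le
  have hs := wordVal_sub c (critWord m q) v c
  rw [← hv] at hs
  by_contra! hn
  nlinarith

/-! ### Values of periodic digit sequences -/

lemma summable_digits {β : ℝ} (hβ : 1 < β) {x : ℕ → ℕ} (hx : ∀ i, x i ≤ 1) :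
    Summable fun i => (x i : ℝ) / β ^ (i + 1) := by
  have h0 : 0 < β := by linarith
  refine Summable.of_nonneg_of_le (fun i => by positivity) (fun i => ?_)
    (summable_geometric_of_lt_one (r := β⁻¹) (by positivity) (inv_lt_one_of_one_lt₀ hβ))
  have h1 : (x i : ℝ) ≤ 1 := by exact_mod_cast hx i
  rw [inv_pow, div_eq_mul_inv]
  have h2 : (β ^ (i + 1))⁻¹ ≤ (β ^ i)⁻¹ :=
    inv_anti₀ (by positivity) (pow_le_pow_right₀ hβ.le (by omega))
  have h3 : 0 ≤ (β ^ (i + 1))⁻¹ := by positivity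
  nlinarith

lemma val_shift {β : ℝ} (hβ : 1 < β) {x : ℕ → ℕ} (hx : ∀ i, x i ≤ 1) :
    val β x = β⁻¹ * (x 0 + val β (fun i => x (i + 1))) := by
  have h0 : β ≠ 0 := by linarith
  unfold val
  rw [(summable_digits hβ hx).tsum_eq_zero_add, mul_add, ← tsum_mul_left]
  congr 1
  · simp; field_simp
  · refine tsum_congr fun i => ?_
    field_simp
    ring

lemma val_word {β : ℝ} (hβ : 1 < β) (w : List ℕ) : ∀ (x : ℕ → ℕ), (∀ i, x i ≤ 1) →
    (∀ i < w.length, x i = w.getD i 0) →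
    val β x = wordVal β⁻¹ w (val β (fun i => x (i + w.length))) := by
  induction w with
  | nil => intro x _ _; simp [wordVal]
  | cons d w ih =>
    intro x hx hw
    rw [val_shift hβ hx, ih (fun i => x (i + 1)) (fun i => hx _)
      (fun i hi => by simpa using hw (i + 1) (by simpa using hi))]
    have := hw 0 (by simp)
    simp only [List.getD_cons_zero] at this
    simp only [wordVal, this, List.length_cons]
    congr 4

lemma val_wordSeq {β : ℝ} (hβ : 1 < β) {w : List ℕ} (hw : ∀ a ∈ w, a ≤ 1) :
    val β (wordSeq w) = wordVal β⁻¹ w (val β (wordSeq w)) := by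
  have h := val_word hβ w (wordSeq w) ?_ ?_
  · conv_lhs => rw [h]
    congr 2
    funext i
    simp [wordSeq]
  · intro i
    unfold wordSeq
    rw [List.getD_eq_getElem?_getD]
    rcases h : w[i % w.length]? with _ | a
    · simp
    · exact hw a (List.mem_of_getElem? h)
  · intro i hi
    simp [wordSeq, Nat.mod_eq_of_lt hi]

/-! ### The critical point survives -/

/-- Every nonempty suffix of `w`, followed by the tail value `y`, has value in `(v, 1)`. -/
def SuffixAbove (c v : ℝ) : List ℕ → ℝ → Prop
  | [], _ => True
  | d :: w, y => (v < wordVal c (d :: w) y ∧ wordVal c (d :: w) y < 1) ∧ SuffixAbove c v w y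

lemma suffixAbove_append (c v : ℝ) (u w : List ℕ) (y : ℝ) (hu : SuffixAbove c v u (wordVal c w y))
    (hw : SuffixAbove c v w y) : SuffixAbove c v (u ++ w) y := by
  induction u with
  | nil => exact hw
  | cons d u ih =>
    refine ⟨?_, ih hu.2⟩
    have := hu.1
    rwa [← wordVal_append] at this

lemma suffixAbove_rep {c v : ℝ} (hc : 0 < c) (h3 : c ^ 3 + c ^ 2 + c = 1)
    (hv : v < c ^ 2 + c ^ 3) (hvc : v < c) (k : ℕ) {y : ℝ} (hy : 0 ≤ y) (hyc : y < c) :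
    SuffixAbove c v (rep k) y := by
  induction k with
  | zero => simp [rep, SuffixAbove]
  | succ k ih =>
    rw [rep_succ]
    refine suffixAbove_append _ _ _ _ _ ?_ ih
    have h1 := wordVal_nonneg hc (rep k) hy
    have h2 := wordVal_block_lt hc h3 (k := k) hyc
    set u := wordVal c (rep k) y
    simp only [SuffixAbove, wordVal, and_true]
    push_cast
    have e1 := mul_nonneg hc.le h1
    have e2 := mul_nonneg hc.le e1
    have e3 := mul_nonneg hc.le e2
    have f1 := mul_pos hc (sub_pos.2 h2)
    have f2 := mul_pos hc f1
    have f3 := mul_pos hc f2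
    have := pow_pos hc 2
    have := pow_pos hc 3
    refine ⟨⟨?_, ?_⟩, ⟨?_, ?_⟩, ?_, ?_⟩ <;> nlinarith

/-- If `y = [d w v]_β` and all nonempty suffixes of `w` followed by `v` have value in `(v, 1)`, then
the orbit of `y` runs through these values, and so stays above `v` until it reaches `v`. -/
lemma iterate_word {β v : ℝ} (hβ : 1 < β) (h0 : 0 ≤ v) (hv1 : v < 1) (w : List ℕ) :
    SuffixAbove β⁻¹ v w v → ∀ y, ∀ d : ℕ, y = β⁻¹ * (d + wordVal β⁻¹ w v) →
      (Tmap β)^[w.length + 1] y = v ∧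
      ∀ j, 0 < j → j < w.length + 1 → v < (Tmap β)^[j] y := by
  have hT : ∀ (d : ℕ) (u : ℝ), 0 ≤ u → u < 1 → Tmap β (β⁻¹ * (d + u)) = u := by
    intro d u hu hu1
    have : β * (β⁻¹ * (d + u)) = d + u := by field_simp
    rw [Tmap, this, Int.fract_natCast_add, Int.fract_eq_self.2 ⟨hu, hu1⟩]
  induction w with
  | nil =>
    intro _ y d hy
    refine ⟨?_, fun j h1 h2 => by simp at h2; omega⟩
    simp only [List.length_nil, zero_add, iterate_one, hy]
    exact hT d v h0 hv1
  | cons e w ih =>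
    intro hs y d hy
    have hTy : Tmap β y = wordVal β⁻¹ (e :: w) v := by
      rw [hy]; exact hT d _ (h0.trans hs.1.1.le) hs.1.2
    obtain ⟨i1, i2⟩ := ih hs.2 (Tmap β y) e hTy
    refine ⟨?_, fun j h1 h2 => ?_⟩
    · simpa [List.length_cons, iterate_succ_apply] using i1
    · obtain ⟨j, rfl⟩ : ∃ i, j = i + 1 := ⟨j - 1, by omega⟩
      rw [iterate_succ_apply]
      rcases Nat.eq_zero_or_pos j with rfl | hj
      · simpa [hTy] using hs.1.1
      · exact i2 j hj (by simp at h2; omega)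

lemma crit_survives {β v : ℝ} (hβ : 1 < β) (h3 : β⁻¹ ^ 3 + β⁻¹ ^ 2 + β⁻¹ = 1) {m q : ℕ}
    (hq : m < q) (hv : v = wordVal β⁻¹ (critWord m q) v) :
    v ∈ K β v ∧ minimalPeriod (Tmap β) v = 4 + 3 * m + 3 * q := by
  have hc : 0 < β⁻¹ := by positivity
  set c := β⁻¹ with hcdef
  have hc1 : c < 1 := by nlinarith [pow_pos hc 2, pow_pos hc 3]
  obtain ⟨h0, hvc⟩ := fix_mem hc h3 hv
  have hA : ∀ y, 0 ≤ y → y < c → 0 ≤ wordVal c [0,1] y ∧ wordVal c [0,1] y < c ^ 2 + c ^ 3 ∧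
      wordVal c [0,1] y < c := by
    intro y hy hyc
    have e1 := mul_pos (pow_pos hc 2) (sub_pos.2 hyc)
    refine ⟨wordVal_nonneg hc _ hy, ?_, ?_⟩ <;> simp only [wordVal] <;> push_cast <;>
      nlinarith [pow_pos hc 4]
  -- the three tail values at the block boundaries
  set u₁ := wordVal c (rep q) v with hu₁
  have h1 : 0 ≤ u₁ ∧ u₁ < c := ⟨wordVal_nonneg hc _ h0, wordVal_block_lt hc h3 hvc⟩
  set u₂ := wordVal c [0,1] u₁ with hu₂
  have h2 := hA u₁ h1.1 h1.2
  set u₃ := wordVal c (rep m) u₂ with hu₃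
  have h4 : 0 ≤ u₃ ∧ u₃ < c := ⟨wordVal_nonneg hc _ h2.1, wordVal_block_lt hc h3 h2.2.2⟩
  have hv' : v = wordVal c [0,1] u₃ := by
    conv_lhs => rw [hv]
    simp only [critWord, wordVal_append, hu₁, hu₂, hu₃]
  have h5 := hA u₃ h4.1 h4.2
  rw [← hv'] at h5
  -- the second `01` starts a strictly larger tail, since it is followed by more `011`
  have hv2 : v < u₂ := by
    rw [hv', hu₂, wordVal_lt_iff hc, hu₃, hu₁]
    obtain ⟨r, rfl⟩ : ∃ r, q = m + (r + 1) := ⟨q - m - 1, by omega⟩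
    rw [rep_add, wordVal_append, wordVal_lt_iff hc, rep_succ, wordVal_append]
    have := wordVal_nonneg hc (rep r) h0
    refine h2.2.1.trans_le ?_
    simp only [wordVal]
    push_cast
    nlinarith [mul_nonneg (pow_pos hc 3).le this]
  have hone : ∀ u, 0 ≤ u → u < c → v < wordVal c [1] u ∧ wordVal c [1] u < 1 := by
    intro u hu huc
    simp only [wordVal]
    push_cast
    have := mul_nonneg hc.le hu
    have := mul_pos hc (sub_pos.2 huc)
    constructor <;> nlinarith [pow_pos hc 3]
  have hS : SuffixAbove c v ([1] ++ (rep m ++ ([0,1] ++ rep q))) v := by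
    have hSq := suffixAbove_rep hc h3 h5.2.1 hvc q h0 hvc
    refine suffixAbove_append _ _ _ _ _ ?_ (suffixAbove_append _ _ _ _ _ ?_
      (suffixAbove_append _ _ _ _ _ ?_ hSq))
    · simp only [wordVal_append]
      exact ⟨hone _ h4.1 h4.2, trivial⟩
    · simp only [wordVal_append]
      exact suffixAbove_rep hc h3 h5.2.1 hvc m h2.1 h2.2.2
    · exact ⟨⟨hv2, h2.2.2.trans hc1⟩, hone _ h1.1 h1.2, trivial⟩
  obtain ⟨hp, hlt⟩ := iterate_word hβ h0 (hvc.trans hc1) _ hS v 0 (by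
    conv_lhs => rw [hv]
    simp [critWord, wordVal, hcdef])
  have hlen : ([1] ++ (rep m ++ ([0,1] ++ rep q))).length + 1 = 4 + 3 * m + 3 * q := by
    simp only [List.length_append, length_rep, List.length_cons, List.length_nil]
    ring
  rw [hlen] at hp hlt
  have hper : IsPeriodicPt (Tmap β) (4 + 3 * m + 3 * q) v := hp
  refine ⟨⟨⟨h0, hvc.trans hc1⟩, fun n => ?_⟩, ?_⟩
  · rw [← hper.iterate_mod_apply]
    rcases Nat.eq_zero_or_pos (n % (4 + 3 * m + 3 * q)) with h | h
    · rw [h]; simp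
    · exact (hlt _ h (Nat.mod_lt _ (by omega))).le
  · refine le_antisymm (hper.minimalPeriod_le (by omega)) ?_
    by_contra! hn
    have := hlt _ (hper.minimalPeriod_pos (by omega)) hn
    rw [iterate_minimalPeriod] at this
    exact lt_irrefl _ this

/-! ### No periodic orbit stays strictly above the critical point -/

/-- In a sequence avoiding `00` and `111` whose period is `1` modulo `3`, a block start is
followed by finitely many `011` and then by `010`. -/
lemma exists_gap {d : ℕ → ℕ} (hd : ∀ n, d n = 0 ∨ d n = 1) (h00 : ∀ n, d n = 0 → d (n + 1) = 1)
    (h111 : ∀ n, d n = 1 → d (n + 1) = 1 → d (n + 2) = 0) {p : ℕ} (hp : p % 3 = 1)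
    (hper : ∀ n, d (n + p) = d n) {n : ℕ} (hn : d n = 0) :
    ∃ k, (∀ j < k, d (n + 3 * j) = 0 ∧ d (n + 3 * j + 1) = 1 ∧ d (n + 3 * j + 2) = 1) ∧
      d (n + 3 * k) = 0 ∧ d (n + 3 * k + 1) = 1 ∧ d (n + 3 * k + 2) = 0 := by
  classical
  have hex : ∃ k, ¬ (d (n + 3 * k) = 0 ∧ d (n + 3 * k + 1) = 1 ∧ d (n + 3 * k + 2) = 1) := by
    by_contra! hall
    have h1 := (hall (p / 3)).2.1
    rw [show n + 3 * (p / 3) + 1 = n + p by omega, hper] at h1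
    omega
  have hmin := fun j (hj : j < Nat.find hex) => not_not.1 (Nat.find_min hex hj)
  have hspec := Nat.find_spec hex
  set k := Nat.find hex
  have hk : d (n + 3 * k) = 0 := by
    rcases Nat.eq_zero_or_pos k with h | h
    · simpa [h] using hn
    · obtain ⟨_, h1, h2⟩ := hmin (k - 1) (by omega)
      have := h111 _ h1 h2
      rwa [show n + 3 * (k - 1) + 1 + 2 = n + 3 * k by omega] at this
  have hk1 := h00 _ hk
  exact ⟨k, hmin, hk, hk1, (hd _).resolve_right fun h => hspec ⟨hk, hk1, h⟩⟩

lemma orbit_rep {c : ℝ} {X : ℕ → ℝ} {d : ℕ → ℕ} (hX : ∀ n, X n = c * (d n + X (n + 1))) (n k : ℕ)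
    (h : ∀ j < k, d (n + 3 * j) = 0 ∧ d (n + 3 * j + 1) = 1 ∧ d (n + 3 * j + 2) = 1) :
    X n = wordVal c (rep k) (X (n + 3 * k)) := by
  induction k with
  | zero => simp [rep, wordVal]
  | succ k ih =>
    rw [ih fun j hj => h j (by omega), rep_add k 1, wordVal_append]
    obtain ⟨h0, h1, h2⟩ := h k (by omega)
    congr 1
    rw [hX (n + 3 * k), hX (n + 3 * k + 1), hX (n + 3 * k + 2), h0, h1, h2]
    simp [rep, wordVal, mul_add, add_assoc]

/-- A tail `01(011)^k 010…` above `01(011)^r …` has `k ≥ r`. -/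
lemma le_gap {c : ℝ} (hc : 0 < c) {k r : ℕ} {Y u : ℝ} (hY : Y < c ^ 2 + c ^ 3) (hu : 0 ≤ u)
    (h : wordVal c ([0,1] ++ rep r) u < wordVal c ([0,1] ++ rep k) Y) : r ≤ k := by
  by_contra! hk
  obtain ⟨s, rfl⟩ : ∃ s, r = k + (s + 1) := ⟨r - k - 1, by omega⟩
  rw [wordVal_append, wordVal_append, wordVal_lt_iff hc, rep_add, wordVal_append,
    wordVal_lt_iff hc, rep_succ, wordVal_append] at h
  have := wordVal_nonneg hc (rep s) hu
  simp only [wordVal] at h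
  push_cast at h
  nlinarith [mul_nonneg (pow_pos hc 3).le this]

/-- The combinatorial core: `X` is a `p`-periodic orbit with digits `d`, and `hpmin` says that
`p` is its minimal period. Write the digits as blocks `01(011)^{k_i}`. If there are two blocks per
period, the orbit is either the critical one or has smaller period; the number of blocks is `2`
modulo `3`, so otherwise there are at least five, and some `k_i` is too small. -/
lemma no_orbit_above {c v : ℝ} (hc : 0 < c) (h3 : c ^ 3 + c ^ 2 + c = 1) {m q p : ℕ}
    (hq : q = m + 1 ∨ q = m + 2) (hp : p = 4 + 3 * m + 3 * q)
    (hv : v = wordVal c (critWord m q) v) {X : ℕ → ℝ} {d : ℕ → ℕ} (hd : ∀ n, d n = 0 ∨ d n = 1)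
    (hX : ∀ n, X n = c * (d n + X (n + 1))) (hvX : ∀ n, v < X n) (hX1 : ∀ n, X n < 1)
    (hdp : ∀ n, d (n + p) = d n) (hXp : ∀ n, X (n + p) = X n)
    (hpmin : ∀ n k, X (n + k) = X n → p ∣ k) : False := by
  have hc1 : c < 1 := by nlinarith [pow_pos hc 2, pow_pos hc 3]
  obtain ⟨h0, hvc⟩ := fix_mem hc h3 hv
  set u₁ := wordVal c ([0,1] ++ rep q) v with hu₁
  have hu₁0 : 0 ≤ u₁ := wordVal_nonneg hc _ h0
  have hv' : v = wordVal c ([0,1] ++ rep m) u₁ := by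
    conv_lhs => rw [hv]
    rw [hu₁, ← wordVal_append]
    simp [critWord]
  have hvlow : c ^ 2 ≤ v := by
    have := wordVal_nonneg hc (rep m) hu₁0
    rw [hv', wordVal_append]
    simp only [wordVal]
    push_cast
    nlinarith [mul_nonneg (pow_pos hc 2).le this]
  have hX0 : ∀ n, 0 ≤ X n := fun n => h0.trans (hvX n).le
  have h00 : ∀ n, d n = 0 → d (n + 1) = 1 := by
    intro n hn
    refine (hd _).resolve_left fun hn1 => ?_
    have h1 := hX n
    rw [hX (n + 1), hn, hn1] at h1
    push_cast at h1
    nlinarith [mul_pos (pow_pos hc 2) (sub_pos.2 (hX1 (n + 1 + 1))), hvX n]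
  have h111 : ∀ n, d n = 1 → d (n + 1) = 1 → d (n + 2) = 0 := by
    intro n hn hn1
    refine (hd _).resolve_right fun hn2 => ?_
    have h1 := hX n
    rw [hX (n + 1), hX (n + 1 + 1), hn, hn1, show n + 1 + 1 = n + 2 from rfl, hn2] at h1
    push_cast at h1
    nlinarith [mul_nonneg (pow_pos hc 3).le (hX0 (n + 2 + 1)), hX1 n]
  have hp3 : p % 3 = 1 := by omega
  set P : ℕ → Prop := fun n => d n = 0 ∧ d (n + 1) = 1 ∧ d (n + 2) = 0 with hP
  have hPX : ∀ n, P n → X n < c ^ 2 + c ^ 3 := by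
    rintro n ⟨a, b, e⟩
    rw [hX n, hX (n + 1), hX (n + 1 + 1), a, b, show n + 1 + 1 = n + 2 from rfl, e]
    push_cast
    nlinarith [mul_pos (pow_pos hc 3) (sub_pos.2 (hX1 (n + 2 + 1)))]
  have hnext : ∀ n, P n → ∃ k, P (n + 2 + 3 * k) ∧
      (∀ l, n < l → P l → n + 2 + 3 * k ≤ l) ∧
      X n = wordVal c ([0,1] ++ rep k) (X (n + 2 + 3 * k)) := by
    rintro n ⟨a, b, e⟩
    obtain ⟨k, hk, hkP⟩ := exists_gap hd h00 h111 hp3 hdp e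
    refine ⟨k, hkP, ?_, ?_⟩
    · rintro l hl ⟨l0, l1, l2⟩
      by_contra! hlt
      rcases Nat.lt_or_ge l (n + 2) with h | h
      · rw [show l = n + 1 by omega] at l0
        omega
      obtain ⟨j1, j2, j3⟩ := hk ((l - (n + 2)) / 3) (by omega)
      have hmod : (l - (n + 2)) % 3 = 0 ∨ (l - (n + 2)) % 3 = 1 ∨ (l - (n + 2)) % 3 = 2 := by omega
      rcases hmod with h | h | h
      · rw [show n + 2 + 3 * ((l - (n + 2)) / 3) + 2 = l + 2 by omega] at j3
        omega
      · rw [show n + 2 + 3 * ((l - (n + 2)) / 3) + 1 = l by omega] at j2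
        omega
      · rw [show n + 2 + 3 * ((l - (n + 2)) / 3) + 2 = l by omega] at j3
        omega
    · have h1 := orbit_rep hX (n + 2) k hk
      rw [wordVal_append, ← h1, hX n, hX (n + 1), a, b]
      simp [wordVal]
  -- consecutive gaps obey the lexicographic constraint imposed by the critical word
  have hgap : ∀ n k, P (n + 2 + 3 * k) →
      X n = wordVal c ([0,1] ++ rep k) (X (n + 2 + 3 * k)) →
      m ≤ k ∧ (k = m → u₁ < X (n + 2 + 3 * k)) := by
    intro n k hk hXn
    have h1 := hvX n
    rw [hXn, hv'] at h1
    refine ⟨le_gap hc (hPX _ hk) hu₁0 h1, ?_⟩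
    rintro rfl
    rwa [wordVal_lt_iff hc] at h1
  have hgap2 : ∀ n k, P (n + 2 + 3 * k) →
      X n = wordVal c ([0,1] ++ rep k) (X (n + 2 + 3 * k)) → u₁ < X n → q ≤ k := by
    intro n k hk hXn h1
    rw [hXn, hu₁] at h1
    exact le_gap hc (hPX _ hk) h0 h1
  have hstart : ∃ n, P n := by
    have hz : ∃ n, d n = 0 := by
      by_contra! hall
      have h := fun n => (hd n).resolve_left (hall n)
      exact hall 2 (h111 0 (h 0) (h 1))
    obtain ⟨n, hn⟩ := hz
    obtain ⟨k, _, hk⟩ := exists_gap hd h00 h111 hp3 hdp hn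
    exact ⟨_, hk⟩
  obtain ⟨n0, hn0⟩ := hstart
  have hnp : P (n0 + p) := by
    simp only [hP]
    rw [show n0 + p + 1 = n0 + 1 + p by ring, show n0 + p + 2 = n0 + 2 + p by ring, hdp, hdp, hdp]
    exact hn0
  obtain ⟨k0, P1, B0, E0⟩ := hnext n0 hn0
  obtain ⟨k1, P2, B1, E1⟩ := hnext _ P1
  obtain ⟨k2, P3, B2, E2⟩ := hnext _ P2
  obtain ⟨k3, P4, B3, E3⟩ := hnext _ P3
  obtain ⟨k4, P5, B4, E4⟩ := hnext _ P4
  obtain ⟨g0, s0⟩ := hgap _ _ P1 E0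
  obtain ⟨g1, -⟩ := hgap _ _ P2 E1
  obtain ⟨g2, -⟩ := hgap _ _ P3 E2
  obtain ⟨g3, -⟩ := hgap _ _ P4 E3
  obtain ⟨g4, -⟩ := hgap _ _ P5 E4
  have r0 := fun h => hgap2 _ _ P2 E1 (s0 h)
  have b0 := B0 (n0 + p) (by omega) hnp
  have b1 := B1 (n0 + p) (by omega) hnp
  have hfix : ∀ y, y = wordVal c ([0,1] ++ rep m) (wordVal c ([0,1] ++ rep q) y) → y = v := by
    intro y hy
    refine wordVal_fix_unique hc hc1 (w := critWord m q) (by simp [critWord]) ?_ hv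
    rw [← wordVal_append] at hy
    simpa [critWord] using hy
  by_cases hend : n0 + p = n0 + 2 + 3 * k0 + 2 + 3 * k1
  · have hX2 : X (n0 + 2 + 3 * k0 + 2 + 3 * k1) = X n0 := by rw [← hend, hXp]
    rw [hX2] at E1
    have hcases : (k0 = m ∧ k1 = q) ∨ (k0 = q ∧ k1 = m) ∨ (k0 = m + 1 ∧ k1 = m + 1) := by omega
    rcases hcases with ⟨rfl, rfl⟩ | ⟨rfl, rfl⟩ | ⟨rfl, rfl⟩
    · have := hfix (X n0) (by rw [← E1]; exact E0)
      exact (hvX n0).ne' this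
    · have := hfix _ (by rw [← E0]; exact E1)
      exact (hvX _).ne' this
    · -- both tails are the fixed value of the same word, so the period is halved
      have heq : X (n0 + 2 + 3 * (m + 1)) = X n0 := by
        refine wordVal_fix_unique hc hc1
          (w := ([0,1] ++ rep (m + 1)) ++ ([0,1] ++ rep (m + 1))) (by simp) ?_ ?_
        · rw [wordVal_append, ← E0]; exact E1
        · rw [wordVal_append, ← E1]; exact E0
      have hdvd := hpmin n0 (2 + 3 * (m + 1)) (by rw [← heq]; congr 1; ring)
      have := Nat.le_of_dvd (by omega) hdvd
      omega
  · have b2 := B2 (n0 + p) (by omega) hnp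
    have b3 := B3 (n0 + p) (by omega) hnp
    have b4 := B4 (n0 + p) (by omega) hnp
    omega

lemma S_eq {β : ℝ} (hβ1 : β ^ 3 = β ^ 2 + β + 1) (hβ2 : 1 < β) (hβ3 : β < 2) {m q : ℕ}
    (hq : q = m + 1 ∨ q = m + 2) :
    S β (4 + 3 * m + 3 * q) = val β (wordSeq (critWord m q)) := by
  have hβ0 : 0 < β := by linarith
  have hc : 0 < β⁻¹ := by positivity
  have h3 : β⁻¹ ^ 3 + β⁻¹ ^ 2 + β⁻¹ = 1 := by
    field_simp
    linarith
  have hv := val_wordSeq hβ2 (w := critWord m q) (by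
    intro a ha
    simp [critWord, rep] at ha
    omega)
  set v := val β (wordSeq (critWord m q))
  obtain ⟨hK, hmp⟩ := crit_survives hβ2 h3 (by omega) hv
  refine IsGreatest.csSup_eq ⟨⟨hK.1, v, hK, hmp⟩, ?_⟩
  rintro t ⟨-, x, ⟨hx, hxt⟩, hxp⟩
  by_contra! hvt
  set X : ℕ → ℝ := fun n => (Tmap β)^[n] x with hXdef
  have hX01 : ∀ n, X n ∈ Set.Ico (0:ℝ) 1 := by
    intro n
    rcases n with _ | n
    · exact hx
    · simp only [hXdef, iterate_succ_apply']
      exact ⟨Int.fract_nonneg _, Int.fract_lt_one _⟩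
  have hfl0 : ∀ n, 0 ≤ ⌊β * X n⌋ := fun n => Int.floor_nonneg.2 (mul_nonneg hβ0.le (hX01 n).1)
  have hfl2 : ∀ n, ⌊β * X n⌋ < 2 := by
    intro n
    rw [Int.floor_lt]
    push_cast
    nlinarith [(hX01 n).1, (hX01 n).2]
  have hper : ∀ n, X (n + (4 + 3 * m + 3 * q)) = X n := by
    intro n
    simp only [hXdef]
    rw [iterate_add_apply, ← hxp, iterate_minimalPeriod]
  refine no_orbit_above hc h3 hq rfl hv (X := X) (d := fun n => ⌊β * X n⌋.toNat) ?_ ?_ ?_ ?_ ?_ hper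
    ?_
  · intro n
    have := hfl0 n
    have := hfl2 n
    change ⌊β * X n⌋.toNat = 0 ∨ ⌊β * X n⌋.toNat = 1
    omega
  · intro n
    have h1 : X (n + 1) = Int.fract (β * X n) := by
      simp only [hXdef, iterate_succ_apply']
      rfl
    have h2 : ((⌊β * X n⌋.toNat : ℕ) : ℝ) = (⌊β * X n⌋ : ℝ) := by
      exact_mod_cast Int.toNat_of_nonneg (hfl0 n)
    rw [h1]
    change X n = β⁻¹ * (((⌊β * X n⌋.toNat : ℕ) : ℝ) + Int.fract (β * X n))
    rw [h2, Int.floor_add_fract]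
    field_simp
  · exact fun n => hvt.trans_le (hxt n)
  · exact fun n => (hX01 n).2
  · intro n
    simp only [hper]
  · intro n k hk
    have hpx : x ∈ periodicPts (Tmap β) := by
      rw [← minimalPeriod_pos_iff_mem_periodicPts, hxp]
      omega
    have h1 : IsPeriodicPt (Tmap β) k ((Tmap β)^[n] x) := by
      rw [IsPeriodicPt, IsFixedPt, ← iterate_add_apply, add_comm]
      exact hk
    have h2 := h1.minimalPeriod_dvd
    rwa [minimalPeriod_apply_iterate hpx, hxp] at h2

theorem stmt16 (β : ℝ) (hβ1 : β ^ 3 = β ^ 2 + β + 1) (hβ2 : 1 < β) (hβ3 : β < 2) (z : ℕ) (hz : 1 ≤ z) :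
    S β (6 * z + 1) = val β (wordSeq ([0,1] ++ (List.replicate (z - 1) ([0,1,1] : List ℕ)).flatten ++ [0,1] ++ (List.replicate z ([0,1,1] : List ℕ)).flatten)) ∧
    S β (6 * z + 4) = val β (wordSeq ([0,1] ++ (List.replicate (z - 1) ([0,1,1] : List ℕ)).flatten ++ [0,1] ++ (List.replicate (z + 1) ([0,1,1] : List ℕ)).flatten)) := by
  obtain ⟨m, rfl⟩ : ∃ m, z = m + 1 := ⟨z - 1, by omega⟩
  have h1 := S_eq hβ1 hβ2 hβ3 (m := m) (q := m + 1) (Or.inl rfl)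
  have h2 := S_eq hβ1 hβ2 hβ3 (m := m) (q := m + 2) (Or.inr rfl)
  rw [show 4 + 3 * m + 3 * (m + 1) = 6 * (m + 1) + 1 by ring] at h1
  rw [show 4 + 3 * m + 3 * (m + 2) = 6 * (m + 1) + 4 by ring] at h2
  exact ⟨h1, h2⟩
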